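/- (Double inverse transgression lemma.) Let p be an odd prime, n = 3, and for a = (a_1,a_2,a_3) ∈ (ℤ/p)^3 let T_a := a_1 • (x_2 • y_3 − x_3 • y_2) + a_2 • (x_3 • y_1 − x_1 • y_3) + a_3 • (x_1 • y_2 − x_2 • y_1) ∈ Λ be the inverse transgression of P = x_1•y_2y_3 − x_2•y_1y_3 + x_3•y_1y_2 at a. Then for all a, b ∈ (ℤ/p)^3, φ_b(T_a) = T_a + c · z where c := (a_3 b_2 − a_2 b_3)·x_1 + (a_1 b_3 − a_3 b_1)·x_2 + (a_2 b_1 − a_1 b_2)·x_3 ∈ R; that is, the double inverse transgression τ_b(τ_a(P)) equals the dot product of the cross product b × a of the vectors b and a with (x_1, x_2, x_3). -/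

import Mathlib

/-!
Algebraic model of the inverse transgression map for `G = (ℤ/p)^n`.

`R p n = 𝔽_p[x_1, …, x_n]`, `Λ p n` is the exterior algebra over `R p n` on the free
module `Fin (n+1) → R p n` with standard basis `e_0, …, e_n`; `y p n i = ι e_i`
(modelling `y_{i+1}`) and `z p n = ι e_n`.  `φ p n a` is the algebra map induced by
`e_i ↦ e_i + a_{i+1} e_n` (for `i < n`) and `e_n ↦ 0`.
-/

noncomputable section

open ExteriorAlgebra

abbrev R (p n : ℕ) : Type := MvPolynomial (Fin n) (ZMod p)

abbrev Λ (p n : ℕ) : Type := ExteriorAlgebra (R p n) (Fin (n + 1) → R p n)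

/-- The class `y_{i+1}`, i.e. `ι e_i` for `i = 0, …, n-1`. -/
def y (p n : ℕ) (i : Fin n) : Λ p n :=
  ExteriorAlgebra.ι (R p n) (Pi.single i.castSucc 1)

/-- The extra exterior generator `z = ι e_n`. -/
def z (p n : ℕ) : Λ p n :=
  ExteriorAlgebra.ι (R p n) (Pi.single (Fin.last n) 1)

/-- The linear endomorphism `e_i ↦ e_i + a_{i+1} • e_n` (`i < n`), `e_n ↦ 0`. -/
def f (p n : ℕ) (a : Fin n → ZMod p) :
    (Fin (n + 1) → R p n) →ₗ[R p n] (Fin (n + 1) → R p n) :=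
  ∑ i : Fin n,
    LinearMap.smulRight (LinearMap.proj i.castSucc)
      ((Pi.single i.castSucc 1 : Fin (n + 1) → R p n) +
        algebraMap (ZMod p) (R p n) (a i) • (Pi.single (Fin.last n) 1 : Fin (n + 1) → R p n))

/-- The algebraic inverse-transgression substitution `φ_a`. -/
def φ (p n : ℕ) (a : Fin n → ZMod p) : Λ p n →ₐ[R p n] Λ p n :=
  ExteriorAlgebra.map (f p n a)

/-- The degree-4 class `P = x_1 y_2 y_3 - x_2 y_1 y_3 + x_3 y_1 y_2` for `n = 3`. -/
def P (p : ℕ) : Λ p 3 :=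
  (MvPolynomial.X 0 : R p 3) • (y p 3 1 * y p 3 2)
    - (MvPolynomial.X 1 : R p 3) • (y p 3 0 * y p 3 2)
    + (MvPolynomial.X 2 : R p 3) • (y p 3 0 * y p 3 1)

/-- The inverse transgression
`T_a = a_1 (x_2 y_3 - x_3 y_2) + a_2 (x_3 y_1 - x_1 y_3) + a_3 (x_1 y_2 - x_2 y_1)`
of `P` at `a`. -/
def T (p : ℕ) (a : Fin 3 → ZMod p) : Λ p 3 :=
  algebraMap (ZMod p) (R p 3) (a 0) •
      ((MvPolynomial.X 1 : R p 3) • y p 3 2 - (MvPolynomial.X 2 : R p 3) • y p 3 1)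
    + algebraMap (ZMod p) (R p 3) (a 1) •
      ((MvPolynomial.X 2 : R p 3) • y p 3 0 - (MvPolynomial.X 0 : R p 3) • y p 3 2)
    + algebraMap (ZMod p) (R p 3) (a 2) •
      ((MvPolynomial.X 0 : R p 3) • y p 3 1 - (MvPolynomial.X 1 : R p 3) • y p 3 0)

/-- The polynomial `(b × a) · (x_1, x_2, x_3)`, the double inverse transgression
`τ_b τ_a (P)`. -/
def crossDot (p : ℕ) (a b : Fin 3 → ZMod p) : R p 3 :=
  MvPolynomial.C (a 2 * b 1 - a 1 * b 2) * MvPolynomial.X 0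
    + MvPolynomial.C (a 0 * b 2 - a 2 * b 0) * MvPolynomial.X 1
    + MvPolynomial.C (a 1 * b 0 - a 0 * b 1) * MvPolynomial.X 2

theorem phi_y (p : ℕ) (b : Fin 3 → ZMod p) (i : Fin 3) :
    φ p 3 b (y p 3 i) = y p 3 i + algebraMap (ZMod p) (R p 3) (b i) • z p 3 := by
  have h : f p 3 b (Pi.single i.castSucc 1) = (Pi.single i.castSucc 1 : Fin (3 + 1) → R p 3) +
        algebraMap (ZMod p) (R p 3) (b i) • (Pi.single (Fin.last 3) 1 : Fin (3 + 1) → R p 3) := by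
    unfold f
    rw [LinearMap.sum_apply, Finset.sum_eq_single i]
    · rw [LinearMap.smulRight_apply, LinearMap.proj_apply, Pi.single_eq_same, one_smul]
    · intro j _ hj
      rw [LinearMap.smulRight_apply, LinearMap.proj_apply, Pi.single_eq_of_ne, zero_smul]
      exact fun h => hj (Fin.castSucc_injective _ h)
    · intro h
      exact absurd (Finset.mem_univ i) h
  unfold φ y z
  rw [ExteriorAlgebra.map_apply_ι, h, map_add, map_smul]

/-- Double inverse transgression lemma: for all `a, b ∈ (ℤ/p)^3`,
`φ_b (T_a) = T_a + c • z` where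
`c = (a_3 b_2 - a_2 b_3) x_1 + (a_1 b_3 - a_3 b_1) x_2 + (a_2 b_1 - a_1 b_2) x_3`,
i.e. `τ_b (τ_a (P)) = (b × a) · (x_1, x_2, x_3)`. -/
theorem statement2 (p : ℕ) (hp : p.Prime) (hodd : Odd p) (a b : Fin 3 → ZMod p) :
    φ p 3 b (T p a) = T p a + crossDot p a b • z p 3 := by
  unfold T crossDot
  simp only [map_add, map_sub, map_smul, map_mul, phi_y, MvPolynomial.algebraMap_eq]
  module

end
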